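/- Let m > 2 be a fixed integer and let q be a prime power with (m-1) dividing (q-1). If q > (2^m · m)^2, then for every integer n with 1 < n < q and (n-1) dividing (q-1), not every element of F_q is the sum of an m-potent element and an n-potent element, i.e., C_m + C_n ≠ F_q. -/

import Mathlib

section WeilBound

open Polynomial Finset

/-- A finite sum of polynomials is nonzero as soon as its nonzero terms have pairwise distinct
trailing degrees and at least one term is nonzero. -/
theorem sum_ne_zero_of_natTrailingDegree_injOn {R ι : Type*} [CommRing R] [Fintype ι]
    (t : ι → R[X]) (hinj : ∀ i j, t i ≠ 0 → t j ≠ 0 →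
      (t i).natTrailingDegree = (t j).natTrailingDegree → i = j)
    (hne : ∃ i, t i ≠ 0) : ∑ i, t i ≠ 0 := by
  classical
  obtain ⟨i₀, hi₀⟩ := hne
  obtain ⟨i, hi, hmin⟩ := (univ.filter fun i => t i ≠ 0).exists_min_image
    (fun i => (t i).natTrailingDegree) ⟨i₀, by simpa using hi₀⟩
  simp only [mem_filter, mem_univ, true_and] at hi hmin
  intro h
  have hc := congrArg (fun P => P.coeff (t i).natTrailingDegree) h
  simp only [finsetSum_coeff, coeff_zero] at hc
  rw [sum_eq_single i] at hc
  · exact hi (trailingCoeff_eq_zero.1 hc)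
  · intro j _ hj
    by_cases hj0 : t j = 0
    · simp [hj0]
    · exact coeff_eq_zero_of_lt_natTrailingDegree
        (lt_of_le_of_ne (hmin j hj0) fun e => hj (hinj i j hi hj0 e).symm)
  · simp

theorem natTrailingDegree_pow' {R : Type*} [CommRing R] [IsDomain R] {f : R[X]} (hf : f ≠ 0)
    (n : ℕ) : (f ^ n).natTrailingDegree = n * f.natTrailingDegree := by
  induction n with
  | zero => simp
  | succ n ih => rw [pow_succ, natTrailingDegree_mul (pow_ne_zero _ hf) hf, ih]; ring

section Stepanov

variable {K : Type*} [Field K]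

/-- Linear independence of the auxiliary functions in Stepanov's method, read off from the orders
of vanishing at `0`. -/
theorem stepanov_auxiliary_ne_zero {s ℓ h A B : ℕ} (hs : s = ℓ * h + 1) {f : K[X]} (hf : f ≠ 0)
    (hcop : ℓ.Coprime f.natTrailingDegree) (hA : ℓ * A + ℓ * f.natTrailingDegree ≤ s)
    (r : Fin ℓ × Fin B → K[X]) (hr : ∀ k, (r k).natDegree < A) (hne : ∃ k, r k ≠ 0) :
    ∑ k, r k * X ^ (s * k.2.1) * f ^ (k.1.1 * h) ≠ 0 := by
  have htr : ∀ k, r k ≠ 0 → (r k * X ^ (s * k.2.1) * f ^ (k.1.1 * h)).natTrailingDegree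
      = (r k).natTrailingDegree + s * k.2.1 + k.1.1 * h * f.natTrailingDegree := by
    intro k hk
    rw [natTrailingDegree_mul (mul_ne_zero hk (pow_ne_zero _ X_ne_zero)) (pow_ne_zero _ hf),
      natTrailingDegree_mul_X_pow hk, natTrailingDegree_pow' hf]
  refine sum_ne_zero_of_natTrailingDegree_injOn _ ?_ ?_
  · rintro k k' hk hk' he
    have hk0 : r k ≠ 0 := fun h0 => hk (by simp [h0])
    have hk0' : r k' ≠ 0 := fun h0 => hk' (by simp [h0])
    rw [htr k hk0, htr k' hk0'] at he
    have h1 := (natTrailingDegree_le_natDegree (r k)).trans_lt (hr k)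
    have h2 := (natTrailingDegree_le_natDegree (r k')).trans_lt (hr k')
    obtain ⟨⟨i, hi⟩, ⟨j, hj⟩⟩ := k
    obtain ⟨⟨i', hi'⟩, ⟨j', hj'⟩⟩ := k'
    simp only at he h1 h2
    generalize (r (⟨i, hi⟩, ⟨j, hj⟩)).natTrailingDegree = ρ at *
    generalize (r (⟨i', hi'⟩, ⟨j', hj'⟩)).natTrailingDegree = ρ' at *
    generalize f.natTrailingDegree = e at *
    have hkey : ((s : ℤ)) * ((ℓ * j + i * e : ℤ) - (ℓ * j' + i' * e))
        = (ℓ * ρ' - i' * e) - (ℓ * ρ - i * e) := by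
      have he' : (ρ + s * j + i * h * e : ℤ) = ρ' + s * j' + i' * h * e := by exact_mod_cast he
      have hs' : (s : ℤ) = ℓ * h + 1 := by exact_mod_cast hs
      have : (ℓ : ℤ) * (ρ + s * j + i * h * e) = ℓ * (ρ' + s * j' + i' * h * e) := by rw [he']
      linear_combination this + (i * e - i' * e : ℤ) * hs'
    have hb1 : (ℓ * ρ : ℤ) + ℓ ≤ ℓ * A := by exact_mod_cast (by nlinarith : ℓ * ρ + ℓ ≤ ℓ * A)
    have hb2 : (ℓ * ρ' : ℤ) + ℓ ≤ ℓ * A := by exact_mod_cast (by nlinarith : ℓ * ρ' + ℓ ≤ ℓ * A)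
    have hb3 : (i * e : ℤ) ≤ ℓ * e := by exact_mod_cast Nat.mul_le_mul_right e hi.le
    have hb4 : (i' * e : ℤ) ≤ ℓ * e := by exact_mod_cast Nat.mul_le_mul_right e hi'.le
    have hA' : (ℓ * A + ℓ * e : ℤ) ≤ s := by exact_mod_cast hA
    have hz : ((ℓ * j + i * e : ℤ) - (ℓ * j' + i' * e)) = 0 := by
      have p1 : (0 : ℤ) ≤ ℓ * ρ := by positivity
      have p2 : (0 : ℤ) ≤ ℓ * ρ' := by positivity
      have p3 : (0 : ℤ) ≤ i * e := by positivity
      have p4 : (0 : ℤ) ≤ i' * e := by positivity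
      have p5 : (0 : ℤ) < ℓ := by exact_mod_cast (by omega : 0 < ℓ)
      have p6 : (0 : ℤ) < s := by exact_mod_cast (by omega : 0 < s)
      have hx := Int.eq_zero_of_abs_lt_dvd (dvd_mul_right (s : ℤ)
        ((ℓ * j + i * e : ℤ) - (ℓ * j' + i' * e)))
        (by rw [hkey, abs_lt]; constructor <;> linarith)
      exact (mul_eq_zero.1 hx).resolve_left p6.ne'
    have hii : i = i' := by
      have hd : (ℓ : ℤ) ∣ (e : ℤ) * (i - i') := ⟨j' - j, by linear_combination hz⟩
      have hd2 : (ℓ : ℤ) ∣ (i - i' : ℤ) :=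
        (Nat.isCoprime_iff_coprime.2 hcop).dvd_of_dvd_mul_left hd
      have := Int.eq_zero_of_abs_lt_dvd hd2 (by rw [abs_lt]; constructor <;> omega)
      omega
    subst hii
    have hjj : j = j' := by
      have : (ℓ : ℤ) * (j - j') = 0 := by linear_combination hz
      rcases mul_eq_zero.1 this with h0 | h0 <;> omega
    subst hjj
    rfl
  · obtain ⟨k, hk⟩ := hne
    exact ⟨k, mul_ne_zero (mul_ne_zero hk (pow_ne_zero _ X_ne_zero)) (pow_ne_zero _ hf)⟩

end Stepanov

/-- Stepanov's bound for the number of points of a superelliptic curve over a field with `s ^ 2`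
elements, in terms of the parameters of the auxiliary polynomial. -/
theorem stepanov_card_le {K : Type*} [Field K] [Fintype K] [DecidableEq K] {p r : ℕ}
    [Fact p.Prime] [CharP K p] {s ℓ h A B D : ℕ} (hsp : s = p ^ r) (hK : Fintype.card K = s ^ 2)
    (hs : s = ℓ * h + 1) {f : K[X]} (hf : f ≠ 0) (hcop : ℓ.Coprime f.natTrailingDegree)
    (hD : f.natDegree ≤ D) (hA0 : 0 < A) (hA : ℓ * A + ℓ * D ≤ s)
    (hcount : s * A + B + s * D < ℓ * B * A) (ω : K) :
    #{x : K | f.eval x ≠ 0 ∧ f.eval x ^ (h * (s + 1)) = ω} ≤ A + s * B + s * D := by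
  classical
  let P : (Fin ℓ × Fin B → Fin A → K) → Fin ℓ × Fin B → K[X] := fun c k => ofFn A (c k)
  have hPdeg : ∀ c k, (P c k).natDegree < A := fun c k => ofFn_natDegree_lt hA0 _
  let V : (Fin ℓ × Fin B → Fin A → K) → K[X] := fun c =>
    ∑ k, P c k ^ s * C (ω ^ k.1.1) * X ^ k.2.1 * f ^ ((ℓ - 1 - k.1.1) * h)
  have hVdeg : ∀ c, (V c).natDegree < s * A + B + s * D := by
    intro c
    have hpos : 0 < s * A + B + s * D := by have : 0 < s := by omega
                                            positivity
    refine Nat.lt_of_le_pred hpos (natDegree_sum_le_of_forall_le _ _ fun k _ => ?_)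
    have e1 : (P c k ^ s).natDegree ≤ s * (A - 1) :=
      natDegree_pow_le.trans (Nat.mul_le_mul_left _ (Nat.le_pred_of_lt (hPdeg c k)))
    have e2 : (f ^ ((ℓ - 1 - k.1.1) * h)).natDegree ≤ s * D := by
      refine natDegree_pow_le.trans (Nat.mul_le_mul ?_ hD)
      rw [hs]
      exact (Nat.mul_le_mul_right h (by omega)).trans (Nat.le_succ _)
    have e3 : (P c k ^ s * C (ω ^ k.1.1) * X ^ k.2.1 * f ^ ((ℓ - 1 - k.1.1) * h)).natDegree
        ≤ s * (A - 1) + 0 + k.2.1 + s * D :=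
      natDegree_mul_le_of_le (natDegree_mul_le_of_le (natDegree_mul_le_of_le e1
        (natDegree_C _).le) (natDegree_X_pow _).le) e2
    have e4 : s * (A - 1) ≤ s * A := Nat.mul_le_mul_left _ (by omega)
    have := k.2.2
    refine e3.trans ?_
    rw [Nat.pred_eq_sub_one]
    omega
  obtain ⟨c, c', hcc, hV⟩ := Fintype.exists_ne_map_eq_of_card_lt
    (fun c (i : Fin (s * A + B + s * D)) => (V c).coeff i) (by
      simp only [Fintype.card_fun, Fintype.card_fin, Fintype.card_prod, ← pow_mul]
      rw [mul_comm A]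
      exact Nat.pow_lt_pow_right Fintype.one_lt_card hcount)
  have hVV : V c = V c' := by
    ext i
    by_cases hi : i < s * A + B + s * D
    · exact congrFun hV ⟨i, hi⟩
    · rw [coeff_eq_zero_of_natDegree_lt ((hVdeg c).trans_le (not_lt.1 hi)),
        coeff_eq_zero_of_natDegree_lt ((hVdeg c').trans_le (not_lt.1 hi))]
  have hsub : ∀ k, P (c - c') k ^ s = P c k ^ s - P c' k ^ s := by
    intro k
    simp only [P, Pi.sub_apply, map_sub, hsp]
    rw [sub_pow_char_pow]
  have hV0 : V (c - c') = 0 := by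
    have : V (c - c') = V c - V c' := by
      simp only [V, hsub, sub_mul, sum_sub_distrib]
    rw [this, hVV, sub_self]
  set d := c - c' with hd
  have hW := stepanov_auxiliary_ne_zero hs hf hcop
    ((Nat.add_le_add_left
      (Nat.mul_le_mul_left _ ((natTrailingDegree_le_natDegree f).trans hD)) _).trans hA)
    (P d) (hPdeg d) (by
      by_contra! hcon
      refine hcc (sub_eq_zero.1 (funext fun k => funext fun l => ?_))
      have := congrArg (fun Q => Q.coeff l.1) (hcon k)
      simpa [P, ofFn_coeff_eq_val_of_lt, hd] using this)
  set W := ∑ k : Fin ℓ × Fin B, P d k * X ^ (s * k.2.1) * f ^ (k.1.1 * h) with hWdef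
  have hWdeg : W.natDegree ≤ A + s * B + s * D := by
    refine natDegree_sum_le_of_forall_le _ _ fun k _ => ?_
    have e2 : (f ^ (k.1.1 * h)).natDegree ≤ s * D := by
      refine natDegree_pow_le.trans (Nat.mul_le_mul ?_ hD)
      rw [hs]
      exact (Nat.mul_le_mul_right h (by omega)).trans (Nat.le_succ _)
    exact natDegree_mul_le_of_le (natDegree_mul_le_of_le (hPdeg d k).le
      ((natDegree_X_pow _).le.trans (Nat.mul_le_mul_left _ k.2.2.le))) e2
  refine le_trans ?_ hWdeg
  refine le_trans (card_le_card (t := W.roots.toFinset) ?_)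
    ((Multiset.toFinset_card_le _).trans (card_roots' _))
  intro x hx
  simp only [mem_filter, mem_univ, true_and] at hx
  obtain ⟨hx0, hxω⟩ := hx
  rw [Multiset.mem_toFinset, mem_roots hW, IsRoot.def]
  have hxs : x ^ (s * s) = x := by rw [← sq, ← hK, FiniteField.pow_card]
  have hs0 : s ≠ 0 := by omega
  have hmain : f.eval x ^ ((ℓ - 1) * h) * W.eval x ^ s = (V d).eval x := by
    have : W.eval x ^ s = ∑ k : Fin ℓ × Fin B,
        ((P d k).eval x * x ^ (s * k.2.1) * f.eval x ^ (k.1.1 * h)) ^ s := by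
      simp only [W, eval_finsetSum, eval_mul, eval_pow, eval_X, hsp]
      exact sum_pow_char_pow _ _ _ _
    rw [this, mul_sum]
    simp only [V, eval_finsetSum, eval_mul, eval_pow, eval_X, eval_C]
    refine sum_congr rfl fun k _ => ?_
    have hk : (ℓ - 1) * h = (ℓ - 1 - k.1.1) * h + k.1.1 * h := by
      rw [← add_mul]; congr 1; omega
    have e1 : (x ^ (s * k.2.1)) ^ s = x ^ k.2.1 := by
      rw [← pow_mul, show s * k.2.1 * s = s * s * k.2.1 by ring, pow_mul, hxs]
    have e2 : ω ^ k.1.1 = f.eval x ^ (k.1.1 * h) * (f.eval x ^ (k.1.1 * h)) ^ s := by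
      rw [← hxω, ← pow_mul, ← pow_mul, ← pow_add]; congr 1; ring
    rw [mul_pow, mul_pow, e1, e2, hk, pow_add]
    ring
  rw [hV0, eval_zero] at hmain
  rcases mul_eq_zero.1 hmain with h0 | h0
  · exact absurd h0 (pow_ne_zero _ hx0)
  · exact (pow_eq_zero_iff hs0).1 h0

/-- Stepanov's bound for the number of points of a superelliptic curve, for a suitable choice of the
parameters. -/
theorem stepanov_bound {K : Type*} [Field K] [Fintype K] [DecidableEq K] {p r : ℕ}
    [Fact p.Prime] [CharP K p] {s ℓ h D : ℕ} (hsp : s = p ^ r) (hK : Fintype.card K = s ^ 2)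
    (hs : s = ℓ * h + 1) (hℓ : 0 < ℓ) {f : K[X]} (hf : f ≠ 0)
    (hcop : ℓ.Coprime f.natTrailingDegree) (hD : f.natDegree ≤ D) (ω : K) :
    ℓ * #{x : K | f.eval x ≠ 0 ∧ f.eval x ^ (h * (s + 1)) = ω}
      ≤ s ^ 2 + (4 * ℓ ^ 2 * (D + 3) + ℓ * (5 * D + 11)) * s := by
  rcases lt_or_ge s (4 * ℓ * (D + 3)) with hsmall | hlarge
  · have h1 : #{x : K | f.eval x ≠ 0 ∧ f.eval x ^ (h * (s + 1)) = ω} ≤ s ^ 2 :=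
      (card_filter_le _ _).trans (by rw [card_univ, hK])
    calc _ ≤ ℓ * s ^ 2 := Nat.mul_le_mul_left _ h1
      _ = ℓ * s * s := by ring
      _ ≤ ℓ * (4 * ℓ * (D + 3)) * s := by gcongr
      _ ≤ _ := by nlinarith [Nat.zero_le (s ^ 2), Nat.zero_le (ℓ * (5 * D + 11) * s)]
  · have hA1 : 2 * ℓ * (s / (2 * ℓ)) ≤ s := Nat.mul_div_le _ _
    have hA2 : s < 2 * ℓ * (s / (2 * ℓ)) + 2 * ℓ := by
      have := Nat.lt_mul_div_succ s (show 0 < 2 * ℓ by omega)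
      linarith
    generalize s / (2 * ℓ) = A at hA1 hA2
    have hlarge' : 4 * (ℓ * D) + 12 * ℓ ≤ s := by linarith
    have hℓD : D ≤ ℓ * D := Nat.le_mul_of_pos_left _ hℓ
    have hA3 : s ≤ 4 * (ℓ * A) := by nlinarith
    have hA0 : 0 < A := by
      rcases Nat.eq_zero_or_pos A with h0 | h0
      · subst h0; omega
      · exact h0
    have hh : h ≤ s := by nlinarith
    have hcount : s * A + (h + (4 * D + 10)) + s * D < ℓ * (h + (4 * D + 10)) * A := by
      have e1 : ℓ * (h + (4 * D + 10)) * A + A = s * A + (ℓ * A) * (4 * D + 10) := by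
        rw [hs]; ring
      have e2 : s * (4 * D + 9) ≤ 4 * (ℓ * A) * (4 * D + 9) := Nat.mul_le_mul_right _ hA3
      have e3 : A ≤ ℓ * A := Nat.le_mul_of_pos_left _ hℓ
      nlinarith
    have := stepanov_card_le hsp hK hs hf hcop hD hA0 (by nlinarith) hcount ω
    have hAs : A ≤ s := by nlinarith
    calc _ ≤ ℓ * (A + s * (h + (4 * D + 10)) + s * D) := Nat.mul_le_mul_left _ this
      _ ≤ ℓ * (s + s * (h + (4 * D + 10)) + s * D) := by gcongr
      _ = s * (ℓ * h) + ℓ * (5 * D + 11) * s := by ring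
      _ ≤ s * s + ℓ * (5 * D + 11) * s := by gcongr; omega
      _ ≤ _ := by nlinarith [Nat.zero_le (4 * ℓ ^ 2 * (D + 3) * s)]

theorem mulChar_eq_one_iff_pow_eq_one {F : Type*} [Field F] [Fintype F] {χ : MulChar F ℂ}
    {t : ℕ} (ht : orderOf χ * t = Fintype.card F - 1) {b : F} (hb : b ≠ 0) :
    χ b = 1 ↔ b ^ t = 1 := by
  classical
  obtain ⟨g, hg⟩ := IsCyclic.exists_generator (α := Fˣ)
  have hcard : Fintype.card F - 1 ≠ 0 := by
    have := Fintype.one_lt_card (α := F); omega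
  have ht0 : 0 < t := Nat.pos_of_ne_zero fun h => hcard (by rw [← ht, h, mul_zero])
  obtain ⟨k, hk⟩ := (mem_powers_iff_mem_zpowers.2 (hg (Units.mk0 b hb)))
  have hk' : b = (g : F) ^ k := by
    rw [← Units.val_pow_eq_pow_val]; exact (congrArg Units.val hk).symm
  have hgord : orderOf g = orderOf χ * t := by
    rw [ht, orderOf_eq_card_of_forall_mem_zpowers hg, Nat.card_eq_fintype_card,
      Fintype.card_units]
  have h1 : χ b = 1 ↔ orderOf χ ∣ k := by
    rw [orderOf_dvd_iff_pow_eq_one, MulChar.eq_iff hg, hk', map_pow, MulChar.pow_apply_coe,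
      MulChar.one_apply_coe]
  have h2 : b ^ t = 1 ↔ orderOf χ ∣ k := by
    rw [hk', ← pow_mul, ← Units.val_pow_eq_pow_val, Units.val_eq_one,
      ← orderOf_dvd_iff_pow_eq_one, hgord]
    exact Nat.mul_dvd_mul_iff_right ht0
  rw [h1, h2]

/-- Square-root cancellation, up to a constant, for sums of characters of prime order over
extensions of even degree. -/
theorem norm_sum_mulChar_norm_le {F K : Type*} [Field F] [Fintype F] [Field K] [Fintype K]
    [Algebra F K] {χ : MulChar F ℂ} (hℓ : (orderOf χ).Prime)
    {r : ℕ} (hK : Fintype.card K = (Fintype.card F ^ r) ^ 2)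
    {f : K[X]} (hf : f ≠ 0) (hcop : (orderOf χ).Coprime f.natTrailingDegree) :
    ‖∑ x : K, χ (Algebra.norm F (f.eval x))‖ ≤
      (4 * orderOf χ ^ 2 * (f.natDegree + 3) + orderOf χ * (5 * f.natDegree + 11)
        + f.natDegree : ℕ) * (Fintype.card F ^ r : ℝ) := by
  classical
  obtain ⟨p, hp⟩ := CharP.exists F
  have hpp : Fact p.Prime := ⟨CharP.char_is_prime F p⟩
  obtain ⟨n, -, hn⟩ := FiniteField.card F p
  have hpK : CharP K p := charP_of_injective_algebraMap (algebraMap F K).injective p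
  set q := Fintype.card F with hq
  set ℓ := orderOf χ with hℓdef
  have hq1 : 1 < q := Fintype.one_lt_card
  obtain ⟨t, ht⟩ := MulChar.orderOf_dvd_card_sub_one F χ
  set s := q ^ r with hs
  have hs1 : 0 < s := by positivity
  obtain ⟨g, hg⟩ : q - 1 ∣ s - 1 := by simpa using Nat.sub_dvd_pow_sub_pow q 1 r
  have hgs : s = ℓ * (t * g) + 1 := by rw [← mul_assoc, ← ht, ← hg]; omega
  have hexp : t * ((Nat.card K - 1) / (Nat.card F - 1)) = t * g * (s + 1) := by
    rw [Nat.card_eq_fintype_card, Nat.card_eq_fintype_card, hK, mul_assoc]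
    congr 1
    refine Nat.div_eq_of_eq_mul_right (by omega) ?_
    rw [← mul_assoc, ← hg]
    obtain ⟨u, hu⟩ : ∃ u, s = u + 1 := ⟨s - 1, by omega⟩
    rw [hu]
    simp only [Nat.add_sub_cancel]
    rw [show (u + 1) ^ 2 = u * (u + 1 + 1) + 1 by ring]
    simp
  have hsp : s = p ^ (n * r) := by rw [hs, hn, pow_mul]
  set D := f.natDegree
  set C := 4 * ℓ ^ 2 * (D + 3) + ℓ * (5 * D + 11)
  have hζ := Complex.isPrimitiveRoot_exp ℓ hℓ.ne_zero
  set ζ := Complex.exp (2 * Real.pi * Complex.I / ℓ)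
  have hζn : ‖ζ‖ = 1 := hζ.norm'_eq_one hℓ.ne_zero
  set G : K → ℂ := fun x => χ (Algebra.norm F (f.eval x)) with hG
  have hNcount : ∀ k, ℓ * #{x : K | f.eval x ≠ 0 ∧ G x = ζ ^ k} ≤ s ^ 2 + C * s := by
    intro k
    rcases (univ.filter fun x : K => f.eval x ≠ 0 ∧ G x = ζ ^ k).eq_empty_or_nonempty with h0 | h0
    · rw [h0]; simp
    · obtain ⟨x₀, hx₀⟩ := h0
      simp only [mem_filter, mem_univ, true_and] at hx₀
      refine le_trans (Nat.mul_le_mul_left _ (card_le_card ?_))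
        (stepanov_bound hsp hK hgs hℓ.pos hf hcop le_rfl (f.eval x₀ ^ (t * g * (s + 1))))
      intro x hx
      simp only [mem_filter, mem_univ, true_and] at hx ⊢
      refine ⟨hx.1, ?_⟩
      have hN0 : Algebra.norm F (f.eval x₀) ≠ 0 := Algebra.norm_ne_zero_iff.2 hx₀.1
      have hN : Algebra.norm F (f.eval x) ≠ 0 := Algebra.norm_ne_zero_iff.2 hx.1
      have h1 : χ (Algebra.norm F (f.eval x) / Algebra.norm F (f.eval x₀)) = 1 := by
        have h2 : χ (Algebra.norm F (f.eval x) / Algebra.norm F (f.eval x₀))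
            * χ (Algebra.norm F (f.eval x₀)) = χ (Algebra.norm F (f.eval x)) := by
          rw [← map_mul, div_mul_cancel₀ _ hN0]
        have h3 : χ (Algebra.norm F (f.eval x₀)) = χ (Algebra.norm F (f.eval x)) :=
          hx₀.2.trans hx.2.symm
        rw [← h3] at h2
        refine mul_right_cancel₀ ?_ (h2.trans (one_mul _).symm)
        rw [show χ (Algebra.norm F (f.eval x₀)) = ζ ^ k from hx₀.2]
        exact pow_ne_zero _ (hζ.ne_zero hℓ.ne_zero)
      rw [mulChar_eq_one_iff_pow_eq_one ht.symm (div_ne_zero hN hN0), div_pow,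
        div_eq_one_iff_eq (pow_ne_zero _ hN0)] at h1
      have h4 := congrArg (algebraMap F K) h1
      rw [map_pow, map_pow, FiniteField.algebraMap_norm_eq_pow, FiniteField.algebraMap_norm_eq_pow,
        ← pow_mul, ← pow_mul, mul_comm _ t, hexp] at h4
      exact h4
  have hcover : ∀ x : K, f.eval x ≠ 0 → ∃ k < ℓ, ζ ^ k = G x := by
    intro x hx
    have hN : Algebra.norm F (f.eval x) ≠ 0 := Algebra.norm_ne_zero_iff.2 hx
    have : NeZero ℓ := ⟨hℓ.ne_zero⟩
    refine hζ.eq_pow_of_pow_eq_one ?_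
    simp only [hG]
    rw [← MulChar.pow_apply' _ hℓ.ne_zero, pow_orderOf_eq_one, MulChar.one_apply hN.isUnit]
  have hsplit : ∀ (x : K) (hx : f.eval x ≠ 0) (w : ℕ → ℂ),
      ∑ k ∈ range ℓ, (if f.eval x ≠ 0 ∧ G x = ζ ^ k then w k else 0) =
        w (hcover x hx).choose := by
    intro x hx w
    obtain ⟨h1, h2⟩ := (hcover x hx).choose_spec
    rw [sum_eq_single (hcover x hx).choose]
    · rw [if_pos ⟨hx, h2.symm⟩]
    · intro k hk hne
      rw [if_neg]
      rintro ⟨-, h3⟩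
      exact hne (hζ.pow_inj (mem_range.1 hk) h1 (h3.symm.trans h2.symm))
    · intro h3; exact absurd (mem_range.2 h1) h3
  have hsum : ∑ x, G x = ∑ k ∈ range ℓ, (#{x : K | f.eval x ≠ 0 ∧ G x = ζ ^ k} : ℂ) * ζ ^ k := by
    have : ∀ x, G x = ∑ k ∈ range ℓ, (if f.eval x ≠ 0 ∧ G x = ζ ^ k then ζ ^ k else 0) := by
      intro x
      by_cases hx : f.eval x = 0
      · simp [hx, hG, MulChar.map_zero]
      · rw [hsplit x hx]; exact (hcover x hx).choose_spec.2.symm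
    rw [sum_congr rfl fun x _ => this x, sum_comm]
    refine sum_congr rfl fun k _ => ?_
    rw [← sum_filter, sum_const, nsmul_eq_mul]
  have hcard : s ^ 2 ≤ ∑ k ∈ range ℓ, #{x : K | f.eval x ≠ 0 ∧ G x = ζ ^ k} + D := by
    have h1 : #{x : K | f.eval x ≠ 0} = ∑ k ∈ range ℓ, #{x : K | f.eval x ≠ 0 ∧ G x = ζ ^ k} := by
      have : ((#{x : K | f.eval x ≠ 0} : ℕ) : ℂ) =
          (∑ k ∈ range ℓ, #{x : K | f.eval x ≠ 0 ∧ G x = ζ ^ k} : ℕ) := by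
        push_cast
        simp only [card_filter, Nat.cast_sum]
        rw [sum_comm]
        refine sum_congr rfl fun x _ => ?_
        by_cases hx : f.eval x = 0
        · simp [hx]
        · have := hsplit x hx fun _ => 1
          push_cast
          rw [this]; simp [hx]
      exact_mod_cast this
    have h2 : #{x : K | f.eval x = 0} ≤ D := by
      refine (card_le_card (t := f.roots.toFinset) fun x hx => ?_).trans
        ((Multiset.toFinset_card_le _).trans (card_roots' _))
      simpa [hf] using hx
    have h3 := card_filter_add_card_filter_not (s := (univ : Finset K)) (fun x => f.eval x = 0)
    rw [card_univ, hK] at h3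
    rw [← h1]
    simp only [ne_eq]
    omega
  have hℓ0 : (0 : ℝ) < ℓ := by exact_mod_cast hℓ.pos
  set b : ℝ := (s ^ 2 + C * s) / ℓ with hb
  have hsum' : ∑ x, G x = ∑ k ∈ range ℓ,
      ((#{x : K | f.eval x ≠ 0 ∧ G x = ζ ^ k} : ℂ) - (b : ℂ)) * ζ ^ k := by
    simp only [sub_mul, sum_sub_distrib, ← mul_sum]
    rw [hζ.geom_sum_eq_zero hℓ.one_lt, hsum]; simp
  have hterm : ∀ k ∈ range ℓ, ‖((#{x : K | f.eval x ≠ 0 ∧ G x = ζ ^ k} : ℂ) - (b : ℂ)) * ζ ^ k‖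
      ≤ b - #{x : K | f.eval x ≠ 0 ∧ G x = ζ ^ k} := by
    intro k _
    have h1 : (#{x : K | f.eval x ≠ 0 ∧ G x = ζ ^ k} : ℝ) ≤ b := by
      rw [hb, le_div_iff₀ hℓ0, mul_comm]
      exact_mod_cast hNcount k
    rw [norm_mul, norm_pow, hζn, one_pow, mul_one, ← Complex.ofReal_natCast, ← Complex.ofReal_sub,
      Complex.norm_real, Real.norm_eq_abs, abs_of_nonpos (by linarith)]
    linarith
  change ‖∑ x, G x‖ ≤ _
  rw [hsum']
  refine (norm_sum_le_of_le _ hterm).trans ?_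
  rw [sum_sub_distrib, sum_const, card_range, nsmul_eq_mul, hb, mul_div_cancel₀ _ hℓ0.ne']
  have hcard' : (s ^ 2 : ℝ) ≤ ∑ k ∈ range ℓ, (#{x : K | f.eval x ≠ 0 ∧ G x = ζ ^ k} : ℝ) + D := by
    exact_mod_cast hcard
  have hs1' : (1 : ℝ) ≤ s := by exact_mod_cast hs1
  have hD0 : (0 : ℝ) ≤ D := by positivity
  have hcs : ((q : ℝ) ^ r) = s := by rw [hs]; push_cast; rfl
  rw [hcs]
  push_cast
  nlinarith

theorem norm_algebraMap_sub {F K : Type*} [Field F] [Field K] [Finite K] [Algebra F K] (a : F)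
    (x : K) :
    Algebra.norm F (algebraMap F K a - x) =
      (minpoly F x).eval a ^ (Module.finrank F K / (minpoly F x).natDegree) := by
  classical
  have hx : IsIntegral F x := IsIntegral.of_finite F x
  let y : IntermediateField.adjoin F {x} := algebraMap F _ a - IntermediateField.AdjoinSimple.gen F x
  have hy : algebraMap F K a - x = algebraMap (IntermediateField.adjoin F {x}) K y := by
    simp [y]
  have hfr : Module.finrank F K / (minpoly F x).natDegree =
      Module.finrank (IntermediateField.adjoin F {x}) K := by
    have h1 := Module.finrank_mul_finrank F (IntermediateField.adjoin F {x}) K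
    rw [IntermediateField.adjoin.finrank hx] at h1
    rw [← h1, Nat.mul_div_cancel_left _ (minpoly.natDegree_pos hx)]
  rw [hfr, hy, ← Algebra.norm_norm (S := IntermediateField.adjoin F {x}), Algebra.norm_algebraMap,
    map_pow]
  congr 1
  let pb := IntermediateField.adjoin.powerBasis hx
  rw [Algebra.norm_eq_matrix_det pb.basis]
  have h2 : minpoly F pb.gen = minpoly F x := by
    rw [IntermediateField.adjoin.powerBasis_gen, IntermediateField.minpoly_gen]
  rw [← h2, ← charpoly_leftMulMatrix pb, Matrix.eval_charpoly]
  congr 1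
  have : y = algebraMap F _ a - pb.gen := by
    rw [IntermediateField.adjoin.powerBasis_gen]
  rw [this, map_sub, AlgHom.commutes]
  rfl

section LFunction

variable (F : Type*) [Field F] [Fintype F]

theorem finite_setOf_monic_natDegree_eq (k : ℕ) : {g : F[X] | g.Monic ∧ g.natDegree = k}.Finite := by
  classical
  refine (Set.finite_range (ofFn (R := F) (k + 1))).subset ?_
  rintro g ⟨-, hg⟩
  exact ⟨toFn (k + 1) g, ofFn_comp_toFn_eq_id_of_natDegree_lt (by omega)⟩

/-- The finite set of monic polynomials of degree `k` over a finite field. -/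
noncomputable def monicsOfDegree (k : ℕ) : Finset F[X] :=
  (finite_setOf_monic_natDegree_eq F k).toFinset

variable {F}

@[simp]
theorem mem_monicsOfDegree {k : ℕ} {g : F[X]} :
    g ∈ monicsOfDegree F k ↔ g.Monic ∧ g.natDegree = k := by
  simp [monicsOfDegree]

variable (F) in
open Classical in
/-- The finite set of monic irreducible polynomials of degree at most `k` over a finite field. -/
noncomputable def irreduciblesUpTo (k : ℕ) : Finset F[X] :=
  ((Finset.range (k + 1)).biUnion (monicsOfDegree F)).filter Irreducible

@[simp]
theorem mem_irreduciblesUpTo {k : ℕ} {P : F[X]} :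
    P ∈ irreduciblesUpTo F k ↔ P.Monic ∧ Irreducible P ∧ P.natDegree ≤ k := by
  simp only [irreduciblesUpTo, mem_filter, mem_biUnion, mem_range, mem_monicsOfDegree,
    Nat.lt_succ_iff]
  constructor
  · rintro ⟨⟨a, ha, hm, rfl⟩, hi⟩; exact ⟨hm, hi, ha⟩
  · rintro ⟨hm, hi, ha⟩; exact ⟨⟨_, ha, hm, rfl⟩, hi⟩

open Classical in
theorem natDegree_eq_sum_irreducibles {k : ℕ} {g : F[X]} (hg : g.Monic) (hk : g.natDegree = k) :
    k = ∑ P ∈ irreduciblesUpTo F k, ∑ r ∈ Icc 1 k, if P ^ r ∣ g then P.natDegree else 0 := by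
  have hprod : (UniqueFactorizationMonoid.normalizedFactors g).prod = g := by
    rw [UniqueFactorizationMonoid.prod_normalizedFactors_eq hg.ne_zero, hg.normalize_eq_self]
  have hmonic : ∀ P ∈ UniqueFactorizationMonoid.normalizedFactors g, P.Monic := by
    intro P hP
    have h1 := UniqueFactorizationMonoid.normalize_normalized_factor P hP
    have h2 := (UniqueFactorizationMonoid.irreducible_of_normalized_factor P hP).ne_zero
    rw [← h1]
    exact monic_normalize h2
  have hsum : k = ((UniqueFactorizationMonoid.normalizedFactors g).map natDegree).sum := by
    rw [← natDegree_multiset_prod_of_monic _ hmonic, hprod, hk]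
  rw [Finset.sum_multiset_map_count] at hsum
  conv_lhs => rw [hsum]
  rw [sum_subset (s₂ := irreduciblesUpTo F k)]
  · refine sum_congr rfl fun P hP => ?_
    rw [mem_irreduciblesUpTo] at hP
    have hpos := hP.2.1.natDegree_pos
    have hdvd : ∀ r, P ^ r ∣ g ↔ r ≤ (UniqueFactorizationMonoid.normalizedFactors g).count P := by
      intro r
      rw [pow_dvd_iff_le_emultiplicity,
        UniqueFactorizationMonoid.emultiplicity_eq_count_normalizedFactors hP.2.1 hg.ne_zero,
        hP.1.normalize_eq_self]
      exact Nat.cast_le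
    simp only [hdvd]
    rw [← sum_filter, sum_const]
    congr 1
    have hle : (UniqueFactorizationMonoid.normalizedFactors g).count P ≤ k := by
      have h1 := natDegree_le_of_dvd ((hdvd _).2 le_rfl) hg.ne_zero
      rw [natDegree_pow, hk] at h1
      exact (Nat.le_mul_of_pos_right _ hpos).trans h1
    have : (Icc 1 k).filter (fun r => r ≤ (UniqueFactorizationMonoid.normalizedFactors g).count P)
        = Icc 1 ((UniqueFactorizationMonoid.normalizedFactors g).count P) := by
      ext r; simp only [mem_filter, mem_Icc]; omega
    rw [this, Nat.card_Icc]; omega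
  · intro P hP
    rw [Multiset.mem_toFinset] at hP
    rw [mem_irreduciblesUpTo]
    exact ⟨hmonic P hP, UniqueFactorizationMonoid.irreducible_of_normalized_factor P hP,
      hk ▸ natDegree_le_of_dvd (UniqueFactorizationMonoid.dvd_of_mem_normalizedFactors hP)
        hg.ne_zero⟩
  · intro P _ hP
    rw [Multiset.mem_toFinset] at hP
    rw [Multiset.count_eq_zero_of_notMem hP, zero_smul]

/-- The coefficients of the `L`-function of a multiplicative function on `F[X]`. -/
noncomputable def lCoeff (ψ : F[X] →* ℂ) (k : ℕ) : ℂ := ∑ g ∈ monicsOfDegree F k, ψ g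

/-- The coefficients of the logarithmic derivative of the `L`-function of a multiplicative
function on `F[X]`. -/
noncomputable def lPowerSum (ψ : F[X] →* ℂ) (j : ℕ) : ℂ :=
  ∑ P ∈ irreduciblesUpTo F j,
    if P.natDegree ∣ j then P.natDegree * ψ P ^ (j / P.natDegree) else 0

theorem lCoeff_zero (ψ : F[X] →* ℂ) : lCoeff ψ 0 = 1 := by
  have : monicsOfDegree F 0 = {1} := by
    ext g
    simp only [mem_monicsOfDegree, mem_singleton]
    constructor
    · rintro ⟨h1, h2⟩; exact h1.natDegree_eq_zero.1 h2
    · rintro rfl; simp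
  simp [lCoeff, this]

theorem lCoeff_one (ψ : F[X] →* ℂ) : lCoeff ψ 1 = ∑ x : F, ψ (X - C x) := by
  classical
  have : monicsOfDegree F 1 = univ.image fun x : F => X - C x := by
    ext g
    simp only [mem_monicsOfDegree, mem_image, mem_univ, true_and]
    constructor
    · rintro ⟨h1, h2⟩
      refine ⟨-g.coeff 0, ?_⟩
      conv_rhs => rw [eq_X_add_C_of_natDegree_le_one h2.le, ← h2, h1.coeff_natDegree]
      simp
    · rintro ⟨x, rfl⟩; exact ⟨monic_X_sub_C x, natDegree_X_sub_C x⟩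
  rw [lCoeff, this, sum_image]
  intro x _ y _ h
  simpa using h

open Classical in
theorem sum_monics_dvd (ψ : F[X] →* ℂ) {k d : ℕ} {Q : F[X]} (hQ : Q.Monic)
    (hd : Q.natDegree = d) :
    ∑ g ∈ monicsOfDegree F k, (if Q ∣ g then ψ g else 0) =
      if d ≤ k then ψ Q * lCoeff ψ (k - d) else 0 := by
  split_ifs with hdk
  · rw [lCoeff, mul_sum, ← sum_filter]
    symm
    refine sum_bij (fun h _ => Q * h) ?_ ?_ ?_ ?_
    · intro h hh
      rw [mem_monicsOfDegree] at hh
      rw [mem_filter, mem_monicsOfDegree, hQ.natDegree_mul hh.1, hh.2, hd]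
      exact ⟨⟨hQ.mul hh.1, by omega⟩, dvd_mul_right _ _⟩
    · intro h _ h' _ e
      exact mul_left_cancel₀ hQ.ne_zero e
    · intro g hg
      rw [mem_filter, mem_monicsOfDegree] at hg
      obtain ⟨⟨hg1, hg2⟩, h, rfl⟩ := hg
      have hh := hQ.of_mul_monic_left hg1
      refine ⟨h, ?_, rfl⟩
      rw [hQ.natDegree_mul hh, hd] at hg2
      rw [mem_monicsOfDegree]
      exact ⟨hh, by omega⟩
    · intro h _
      rw [map_mul]
  · refine sum_eq_zero fun g hg => if_neg fun hdvd => hdk ?_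
    rw [mem_monicsOfDegree] at hg
    rw [← hd, ← hg.2]
    exact natDegree_le_of_dvd hdvd hg.1.ne_zero

/-- Newton's identities for the `L`-function of a multiplicative function on `F[X]`. -/
theorem natCast_mul_lCoeff (ψ : F[X] →* ℂ) (k : ℕ) :
    k * lCoeff ψ k = ∑ j ∈ Icc 1 k, lPowerSum ψ j * lCoeff ψ (k - j) := by
  classical
  have h1 : k * lCoeff ψ k = ∑ P ∈ irreduciblesUpTo F k, ∑ r ∈ Icc 1 k,
      if r * P.natDegree ≤ k then
        P.natDegree * ψ P ^ r * lCoeff ψ (k - r * P.natDegree) else 0 := by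
    have : k * lCoeff ψ k = ∑ g ∈ monicsOfDegree F k, ∑ P ∈ irreduciblesUpTo F k,
        ∑ r ∈ Icc 1 k, P.natDegree * (if P ^ r ∣ g then ψ g else 0) := by
      rw [lCoeff, mul_sum]
      refine sum_congr rfl fun g hg => ?_
      rw [mem_monicsOfDegree] at hg
      conv_lhs => rw [natDegree_eq_sum_irreducibles hg.1 hg.2]
      push_cast
      simp only [sum_mul]
      refine sum_congr rfl fun P _ => sum_congr rfl fun r _ => ?_
      split_ifs <;> simp
    rw [this, sum_comm]
    refine sum_congr rfl fun P hP => ?_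
    rw [mem_irreduciblesUpTo] at hP
    rw [sum_comm]
    refine sum_congr rfl fun r _ => ?_
    rw [← mul_sum, sum_monics_dvd ψ (hP.1.pow r) (natDegree_pow P r), map_pow]
    split_ifs
    · ring
    · simp
  have h2 : ∑ j ∈ Icc 1 k, lPowerSum ψ j * lCoeff ψ (k - j) =
      ∑ P ∈ irreduciblesUpTo F k, ∑ j ∈ Icc 1 k, if P.natDegree ∣ j then
        P.natDegree * ψ P ^ (j / P.natDegree) * lCoeff ψ (k - j) else 0 := by
    rw [sum_comm]
    refine sum_congr rfl fun j hj => ?_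
    rw [mem_Icc] at hj
    rw [lPowerSum, sum_mul]
    rw [sum_subset (s₂ := irreduciblesUpTo F k)]
    · refine sum_congr rfl fun P _ => ?_
      split_ifs <;> simp
    · intro P hP
      rw [mem_irreduciblesUpTo] at hP ⊢
      exact ⟨hP.1, hP.2.1, hP.2.2.trans hj.2⟩
    · intro P hP hP'
      rw [mem_irreduciblesUpTo] at hP hP'
      rw [if_neg, zero_mul]
      exact fun hdvd => hP' ⟨hP.1, hP.2.1, Nat.le_of_dvd (by omega) hdvd⟩
  rw [h1, h2]
  refine sum_congr rfl fun P hP => ?_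
  rw [mem_irreduciblesUpTo] at hP
  have hpos := hP.2.1.natDegree_pos
  rw [← sum_filter, ← sum_filter]
  refine sum_nbij' (fun r => r * P.natDegree) (fun j => j / P.natDegree) ?_ ?_ ?_ ?_ ?_
  · intro r hr
    simp only [mem_filter, mem_Icc] at hr ⊢
    exact ⟨⟨Nat.mul_pos hr.1.1 hpos, hr.2⟩, dvd_mul_left _ _⟩
  · intro j hj
    simp only [mem_filter, mem_Icc] at hj ⊢
    obtain ⟨⟨h1, h2⟩, h3⟩ := hj
    exact ⟨⟨Nat.div_pos (Nat.le_of_dvd h1 h3) hpos, (Nat.div_le_self _ _).trans h2⟩,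
      by rwa [Nat.div_mul_cancel h3]⟩
  · intro r _
    exact Nat.mul_div_cancel _ hpos
  · intro j hj
    simp only [mem_filter] at hj
    exact Nat.div_mul_cancel hj.2
  · intro r _
    rw [Nat.mul_div_cancel _ hpos]

theorem lPowerSum_eq_sum_minpoly (ψ : F[X] →* ℂ) (K : Type*) [Field K] [Fintype K]
    [Algebra F K] :
    lPowerSum ψ (Module.finrank F K) = ∑ x : K,
      ψ (minpoly F x) ^ (Module.finrank F K / (minpoly F x).natDegree) := by
  classical
  set j := Module.finrank F K with hj
  have hint : ∀ x : K, IsIntegral F x := fun x => IsIntegral.of_finite F x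
  have hmaps : ∀ x ∈ (univ : Finset K), minpoly F x ∈ irreduciblesUpTo F j := by
    intro x _
    rw [mem_irreduciblesUpTo]
    exact ⟨minpoly.monic (hint x), minpoly.irreducible (hint x), minpoly.natDegree_le x⟩
  rw [← sum_fiberwise_of_maps_to hmaps, lPowerSum]
  refine sum_congr rfl fun P hP => ?_
  rw [mem_irreduciblesUpTo] at hP
  have hfib : ∀ x : K, minpoly F x = P ↔ aeval x P = 0 := by
    intro x
    constructor
    · rintro rfl; exact minpoly.aeval F x
    · intro h; exact (minpoly.eq_of_irreducible_of_monic hP.2.1 h hP.1).symm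
  rw [sum_congr rfl (g := fun _ => ψ P ^ (j / P.natDegree)) (fun x hx => by
    rw [(mem_filter.1 hx).2]), sum_const, nsmul_eq_mul]
  split_ifs with hdvd
  · congr 2
    have hPdvd := (hP.2.1.natDegree_dvd_iff_dvd_X_pow_card_pow_sub_X).1 hdvd
    have hcard : Nat.card F ^ j = Fintype.card K := by
      rw [Nat.card_eq_fintype_card, ← Module.card_eq_pow_finrank]
    rw [hcard] at hPdvd
    have hPdvd' := Polynomial.map_dvd (algebraMap F K) hPdvd
    simp only [Polynomial.map_sub, Polynomial.map_pow, map_X] at hPdvd'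
    have hne : (X ^ Fintype.card K - X : K[X]) ≠ 0 :=
      FiniteField.X_pow_card_sub_X_ne_zero K Fintype.one_lt_card
    have hroots : (X ^ Fintype.card K - X : K[X]).roots = univ.val :=
      FiniteField.roots_X_pow_card_sub_X K
    have hsplitsK : (X ^ Fintype.card K - X : K[X]).Splits := by
      rw [splits_iff_card_roots, hroots, FiniteField.X_pow_card_sub_X_natDegree_eq K
        Fintype.one_lt_card]
      rfl
    have hsplits := hsplitsK.of_dvd hne hPdvd'
    have hnodup : (P.map (algebraMap F K)).roots.Nodup :=
      Multiset.nodup_of_le (roots.le_of_dvd hne hPdvd') (by rw [hroots]; exact univ.nodup)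
    have h1 := hsplits.natDegree_eq_card_roots
    rw [natDegree_map] at h1
    rw [h1, ← Multiset.toFinset_card_of_nodup hnodup]
    congr 1
    ext x
    rw [Multiset.mem_toFinset, mem_roots (Polynomial.map_ne_zero hP.1.ne_zero), IsRoot.def,
      eval_map_algebraMap, mem_filter, hfib]
    simp
  · rw [card_eq_zero.2, Nat.cast_zero, zero_mul]
    rw [filter_eq_empty_iff]
    rintro x - rfl
    exact hdvd (minpoly.degree_dvd (hint x))

end LFunction

section EvalMulChar

variable {F : Type*} [Field F]

/-- The completely multiplicative function `g ↦ ∏ a ∈ T, χ (g a) ^ e a` on polynomials. -/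
noncomputable def evalMulChar (χ : MulChar F ℂ) (T : Finset F) (e : F → ℕ) : F[X] →* ℂ where
  toFun g := ∏ a ∈ T, χ (g.eval a) ^ e a
  map_one' := by simp
  map_mul' f g := by simp [mul_pow, prod_mul_distrib]

theorem evalMulChar_apply (χ : MulChar F ℂ) (T : Finset F) (e : F → ℕ) (g : F[X]) :
    evalMulChar χ T e g = ∏ a ∈ T, χ (g.eval a) ^ e a := rfl

variable [Fintype F]

/-- The `L`-function of `evalMulChar χ T e` is a polynomial of degree less than `#T`. -/
theorem lCoeff_evalMulChar_eq_zero {χ : MulChar F ℂ} {T : Finset F} {e : F → ℕ} {a₀ : F}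
    (ha₀ : a₀ ∈ T) (he : e a₀ ≠ 0) (hχ : χ ^ e a₀ ≠ 1) {k : ℕ} (hk : #T ≤ k) :
    lCoeff (evalMulChar χ T e) k = 0 := by
  classical
  set h : F[X] := Lagrange.interpolate T id (Pi.single a₀ 1) with hh
  have hinj : Set.InjOn (id : F → F) T := Function.injective_id.injOn
  have heval : ∀ a ∈ T, h.eval a = (Pi.single a₀ 1 : F → F) a := fun a ha =>
    Lagrange.eval_interpolate_at_node (v := id) _ hinj ha
  have hdeg : ∀ v : F, (C v * h).degree < k := fun v =>
    (((smul_eq_C_mul v (p := h)) ▸ degree_smul_le v h).trans_lt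
      (Lagrange.degree_interpolate_lt _ hinj)).trans_le (by exact_mod_cast hk)
  have hmaps : ∀ v : F, ∀ g ∈ monicsOfDegree F k, g + C v * h ∈ monicsOfDegree F k := by
    intro v g hg
    rw [mem_monicsOfDegree] at hg ⊢
    have hgd : g.degree = k := by rw [degree_eq_natDegree hg.1.ne_zero, hg.2]
    have hlt : (C v * h).degree < g.degree := hgd ▸ hdeg v
    refine ⟨hg.1.add_of_left hlt, ?_⟩
    rw [natDegree_add_eq_left_of_degree_lt hlt, hg.2]
  have hshift : ∀ v : F, ∑ g ∈ monicsOfDegree F k, evalMulChar χ T e (g + C v * h) =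
      lCoeff (evalMulChar χ T e) k := by
    intro v
    refine sum_nbij' (fun g => g + C v * h) (fun g => g + C (-v) * h) (hmaps v) (hmaps (-v)) ?_ ?_
      fun _ _ => rfl
    · intro g _; simp
    · intro g _; simp
  have hzero : ∀ g : F[X], ∑ v : F, evalMulChar χ T e (g + C v * h) = 0 := by
    intro g
    have : ∀ v : F, evalMulChar χ T e (g + C v * h) =
        (χ ^ e a₀) (v + g.eval a₀) * ∏ a ∈ T.erase a₀, χ (g.eval a) ^ e a := by
      intro v
      rw [evalMulChar_apply, ← mul_prod_erase T _ ha₀, MulChar.pow_apply' _ he]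
      congr 1
      · simp [heval a₀ ha₀, add_comm]
      · refine prod_congr rfl fun a ha => ?_
        rw [mem_erase] at ha
        simp [heval a ha.2, ha.1]
    rw [sum_congr rfl fun v _ => this v, ← sum_mul,
      Fintype.sum_equiv (Equiv.addRight (g.eval a₀)) (fun v => (χ ^ e a₀) (v + g.eval a₀))
        (fun v => (χ ^ e a₀) v) (fun _ => rfl),
      MulChar.sum_eq_zero_of_ne_one hχ, zero_mul]
  have hq : (Fintype.card F : ℂ) * lCoeff (evalMulChar χ T e) k = 0 := by
    rw [← nsmul_eq_mul, ← card_univ, ← sum_const, ← sum_congr rfl fun v _ => hshift v, sum_comm]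
    exact sum_eq_zero fun g _ => hzero g
  exact (mul_eq_zero.1 hq).resolve_left (Nat.cast_ne_zero.2 Fintype.card_ne_zero)

theorem exists_norm_lPowerSum_evalMulChar_le {χ : MulChar F ℂ} (hℓ : (orderOf χ).Prime)
    {T : Finset F} {e : F → ℕ} {a₀ : F} (ha₀ : a₀ ∈ T) (hcop : (orderOf χ).Coprime (e a₀)) :
    ∃ B : ℝ, ∀ r : ℕ, r ≠ 0 →
      ‖lPowerSum (evalMulChar χ T e) (2 * r)‖ ≤ B * (Fintype.card F : ℝ) ^ r := by
  classical
  set d := ∑ a ∈ T, e a with hd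
  refine ⟨(4 * orderOf χ ^ 2 * (d + 3) + orderOf χ * (5 * d + 11) + d : ℕ), fun r hr => ?_⟩
  obtain ⟨p, hp⟩ := CharP.exists F
  have : Fact p.Prime := ⟨CharP.char_is_prime F p⟩
  have : NeZero (2 * r) := ⟨by omega⟩
  let K := FiniteField.Extension F p (2 * r)
  let _ : Fintype K := Fintype.ofFinite K
  have hfr : Module.finrank F K = 2 * r := FiniteField.finrank_extension F p (2 * r)
  have hK : Fintype.card K = (Fintype.card F ^ r) ^ 2 := by
    rw [Module.card_eq_pow_finrank (K := F), hfr, ← pow_mul, mul_comm]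
  let f : K[X] := ∏ a ∈ T, (C (algebraMap F K (a - a₀)) - X) ^ e a
  have hne : ∀ c : K, (C c - X : K[X]) ≠ 0 := fun c => by
    rw [← neg_ne_zero, neg_sub]; exact X_sub_C_ne_zero c
  have hf : f ≠ 0 := prod_ne_zero_iff.2 fun a _ => pow_ne_zero _ (hne _)
  have hdeg : f.natDegree = d := by
    rw [natDegree_prod _ _ fun a _ => pow_ne_zero _ (hne _)]
    refine sum_congr rfl fun a _ => ?_
    rw [natDegree_pow, ← neg_sub, natDegree_neg, natDegree_X_sub_C, mul_one]
  have htrail : f.natTrailingDegree = e a₀ := by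
    have h1 : f = (∏ a ∈ T.erase a₀, (C (algebraMap F K (a - a₀)) - X) ^ e a) * (-1) ^ e a₀
        * X ^ e a₀ := by
      rw [mul_assoc, ← mul_pow, ← show _ = f from prod_erase_mul T _ ha₀]
      simp
    have h2 : ((∏ a ∈ T.erase a₀, (C (algebraMap F K (a - a₀)) - X) ^ e a) *
        (-1) ^ e a₀ : K[X]).coeff 0 ≠ 0 := by
      rw [coeff_zero_eq_eval_zero]
      simp only [eval_mul, eval_prod, eval_pow, eval_sub, eval_C, eval_X, sub_zero, eval_neg,
        eval_one]
      refine mul_ne_zero (prod_ne_zero_iff.2 fun a ha => pow_ne_zero _ ?_) (by simp)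
      rw [mem_erase] at ha
      simpa [sub_eq_zero] using ha.1
    have h3 : (∏ a ∈ T.erase a₀, (C (algebraMap F K (a - a₀)) - X) ^ e a) *
        (-1) ^ e a₀ ≠ (0 : K[X]) := fun h => h2 (by rw [h, coeff_zero])
    rw [h1, natTrailingDegree_mul_X_pow h3, natTrailingDegree_eq_zero.2 (Or.inr h2), zero_add]
  have hsum : lPowerSum (evalMulChar χ T e) (2 * r) =
      ∑ x : K, χ (Algebra.norm F (f.eval x)) := by
    have := lPowerSum_eq_sum_minpoly (evalMulChar χ T e) K
    rw [hfr] at this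
    rw [this]
    refine Fintype.sum_equiv (Equiv.subRight (algebraMap F K a₀)) _ _ fun x => ?_
    simp only [f, eval_prod, eval_pow, eval_sub, eval_C, eval_X, map_prod, map_pow,
      Equiv.subRight_apply, map_sub, sub_sub_sub_cancel_right]
    rw [evalMulChar_apply, ← prod_pow]
    refine prod_congr rfl fun a _ => ?_
    have hnorm := norm_algebraMap_sub (K := K) a x
    rw [hfr] at hnorm
    rw [hnorm, map_pow, pow_right_comm]
  have := norm_sum_mulChar_norm_le hℓ hK hf (htrail ▸ hcop)
  rw [hsum]
  rw [hdeg] at this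
  exact_mod_cast this

end EvalMulChar

section RootBound

open Filter Topology

theorem eval_mul_tsum_eq_tsum_antidiagonal {P : ℂ[X]} {G : ℕ → ℂ} {u : ℂ}
    (hG : Summable fun k => ‖G k * u ^ k‖) :
    P.eval u * ∑' k, G k * u ^ k =
      ∑' k, (∑ x ∈ antidiagonal k, P.coeff x.1 * G x.2) * u ^ k := by
  have hsupp : ∀ k ∉ range (P.natDegree + 1), P.coeff k * u ^ k = 0 := by
    intro k hk
    rw [coeff_eq_zero_of_natDegree_lt (by simpa using hk), zero_mul]
  have hP : Summable fun k => ‖P.coeff k * u ^ k‖ :=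
    summable_of_ne_finset_zero (s := range (P.natDegree + 1)) fun k hk => by
      rw [hsupp k hk, norm_zero]
  have heval : P.eval u = ∑' k, P.coeff k * u ^ k := by
    rw [eval_eq_sum_range, tsum_eq_sum hsupp]
  rw [heval, tsum_mul_tsum_eq_tsum_sum_antidiagonal_of_summable_norm hP hG]
  refine tsum_congr fun k => ?_
  rw [sum_mul]
  refine sum_congr rfl fun x hx => ?_
  rw [← mem_antidiagonal.1 hx, pow_add]
  ring

theorem eval_ne_zero_of_natCast_mul_coeff {P : ℂ[X]} {G : ℕ → ℂ} {B s : ℝ}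
    (hP : P.eval 0 ≠ 0) (hG : ∀ k, ‖G k‖ ≤ B * s ^ k)
    (h : ∀ k : ℕ, k * P.coeff k = ∑ x ∈ antidiagonal k, P.coeff x.1 * G x.2)
    (hs : 0 < s) {u : ℂ} (hu : ‖u‖ < s⁻¹) : P.eval u ≠ 0 := by
  intro hroot
  have hP0 : P ≠ 0 := by rintro rfl; simp at hP
  have hu0 : u ≠ 0 := by rintro rfl; exact hP hroot
  obtain ⟨ρ, hρ, hρs⟩ := exists_between hu
  have hρ0 : 0 < ρ := (norm_nonneg u).trans_lt hρ
  have hρs' : s * ρ < 1 := by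
    rw [mul_comm]; exact (lt_inv_mul_iff₀' hs).1 (by simpa using hρs)
  have hB : 0 ≤ B := by simpa using (norm_nonneg _).trans (hG 0)
  have hgeom : Summable fun k => B * (s * ρ) ^ k :=
    (summable_geometric_of_lt_one (by positivity) hρs').mul_left B
  have hbound : ∀ v : ℂ, ‖v‖ ≤ ρ → ∀ k, ‖G k * v ^ k‖ ≤ B * (s * ρ) ^ k := by
    intro v hv k
    rw [norm_mul, norm_pow, mul_pow, ← mul_assoc]
    exact mul_le_mul (hG k) (pow_le_pow_left₀ (norm_nonneg v) hv k) (by positivity) (by positivity)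
  have hsum : ∀ v : ℂ, ‖v‖ ≤ ρ → Summable fun k => ‖G k * v ^ k‖ := fun v hv =>
    hgeom.of_nonneg_of_le (fun _ => norm_nonneg _) (hbound v hv)
  have hle : ∀ v : ℂ, ‖v‖ ≤ ρ → ‖∑' k, G k * v ^ k‖ ≤ ∑' k, B * (s * ρ) ^ k := fun v hv =>
    tsum_of_norm_bounded hgeom.hasSum (hbound v hv)
  have hderiv : ∀ v : ℂ, ‖v‖ ≤ ρ →
      v * P.derivative.eval v = P.eval v * ∑' k, G k * v ^ k := by
    intro v hv
    rw [eval_mul_tsum_eq_tsum_antidiagonal (hsum v hv)]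
    simp_rw [← h]
    rw [tsum_eq_sum (s := range (P.natDegree + 1)) fun k hk => by
      rw [coeff_eq_zero_of_natDegree_lt (by simpa using hk), mul_zero, zero_mul],
      mul_comm, ← eval_mul_X, eval_eq_sum_range' (n := P.natDegree + 1)]
    · refine sum_congr rfl fun k _ => ?_
      cases k with
      | zero => simp
      | succ k => rw [coeff_mul_X, coeff_derivative]; push_cast; ring
    · by_cases hd : P.derivative = 0
      · simp [hd]
      · have := natDegree_derivative_le P
        rw [natDegree_mul_X hd]
        have : P.natDegree ≠ 0 := fun h0 => hd (derivative_of_natDegree_zero h0)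
        omega
  obtain ⟨R, hR, hRu⟩ := exists_eq_pow_rootMultiplicity_mul_and_not_dvd P hP0 u
  set n := P.rootMultiplicity u with hn
  have hn0 : n ≠ 0 := ((rootMultiplicity_pos hP0).2 hroot).ne'
  obtain ⟨k, hk⟩ := Nat.exists_eq_succ_of_ne_zero hn0
  have hkey : ∀ v : ℂ, ‖v‖ ≤ ρ → v ≠ u →
      v * (n * R.eval v + (v - u) * R.derivative.eval v) =
        (v - u) * (R.eval v * ∑' k, G k * v ^ k) := by
    intro v hv hvu
    have h1 := hderiv v hv
    rw [hR, hk] at h1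
    simp only [derivative_mul, derivative_X_sub_C_pow, eval_add, eval_mul, eval_pow, eval_sub,
      eval_X, eval_C, Nat.succ_eq_add_one, Nat.add_sub_cancel, eval_natCast, map_natCast] at h1
    have h2 : (v - u) ^ k ≠ 0 := pow_ne_zero _ (sub_ne_zero.2 hvu)
    apply mul_left_cancel₀ h2
    rw [hk]
    linear_combination h1
  have hlim1 : Tendsto (fun v => v * (n * R.eval v + (v - u) * R.derivative.eval v)) (𝓝[≠] u)
      (𝓝 (u * (n * R.eval u + (u - u) * R.derivative.eval u))) := by
    refine Tendsto.mono_left (Continuous.tendsto ?_ u) nhdsWithin_le_nhds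
    fun_prop
  have hlim2 : Tendsto (fun v => (v - u) * (R.eval v * ∑' k, G k * v ^ k)) (𝓝[≠] u) (𝓝 0) := by
    have h1 : Tendsto (fun v => (v - u) * R.eval v) (𝓝[≠] u) (𝓝 0) := by
      have : Tendsto (fun v => (v - u) * R.eval v) (𝓝 u) (𝓝 ((u - u) * R.eval u)) :=
        Continuous.tendsto (by fun_prop) u
      rw [sub_self, zero_mul] at this
      exact this.mono_left nhdsWithin_le_nhds
    simp_rw [← mul_assoc]
    refine h1.zero_mul_isBoundedUnder_le ?_
    refine ⟨∑' k, B * (s * ρ) ^ k, ?_⟩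
    rw [eventually_map]
    have : ∀ᶠ v : ℂ in 𝓝[≠] u, ‖v‖ < ρ :=
      (continuous_norm.tendsto u).mono_left nhdsWithin_le_nhds |>.eventually (gt_mem_nhds hρ)
    filter_upwards [this] with v hv using hle v hv.le
  have hev : (fun v => v * (n * R.eval v + (v - u) * R.derivative.eval v)) =ᶠ[𝓝[≠] u]
      fun v => (v - u) * (R.eval v * ∑' k, G k * v ^ k) := by
    have : ∀ᶠ v : ℂ in 𝓝[≠] u, ‖v‖ < ρ :=
      (continuous_norm.tendsto u).mono_left nhdsWithin_le_nhds |>.eventually (gt_mem_nhds hρ)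
    filter_upwards [this, self_mem_nhdsWithin] with v hv hvu using hkey v hv.le hvu
  have hfin := tendsto_nhds_unique hlim1 (hlim2.congr' hev.symm)
  rw [sub_self, zero_mul, add_zero] at hfin
  have hRu' : R.eval u ≠ 0 := fun h0 => hRu (dvd_iff_isRoot.2 h0)
  exact mul_ne_zero hu0 (mul_ne_zero (Nat.cast_ne_zero.2 hn0) hRu') hfin

theorem norm_coeff_one_le {L : ℂ[X]} (h0 : L.coeff 0 = 1) {s : ℝ} (hs : 0 < s)
    (hroots : ∀ u : ℂ, L.eval u = 0 → s⁻¹ ≤ ‖u‖) : ‖L.coeff 1‖ ≤ L.natDegree * s := by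
  have heval : L.eval 0 = 1 := by rw [← coeff_zero_eq_eval_zero, h0]
  have hne : L ≠ 0 := by rintro rfl; simp at h0
  have h1 := (IsAlgClosed.splits L).eval_derivative_div_eval_of_ne_zero (x := 0)
    (by rw [heval]; exact one_ne_zero)
  have h2 : L.derivative.eval 0 = L.coeff 1 := by
    rw [← coeff_zero_eq_eval_zero, coeff_derivative]; simp
  rw [heval, h2, div_one] at h1
  rw [h1, (IsAlgClosed.splits L).natDegree_eq_card_roots]
  refine (norm_multiset_sum_le _).trans ?_
  rw [Multiset.map_map, ← nsmul_eq_mul, ← Multiset.card_map (fun z : ℂ => ‖(1 / (0 - z))‖) L.roots]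
  refine Multiset.sum_le_card_nsmul _ _ fun x hx => ?_
  rw [Multiset.mem_map] at hx
  obtain ⟨z, hz, rfl⟩ := hx
  rw [mem_roots hne] at hz
  rw [Function.comp_apply, zero_sub, norm_div, norm_one, norm_neg, one_div]
  exact inv_le_of_inv_le₀ hs (hroots z hz)

/-- If the logarithmic derivative of a polynomial of degree less than `t` has even-indexed
coefficients `O(q ^ r)`, its reciprocal roots are at most `√q` in absolute value, and so its linear coefficient
is at most `(t - 1) * √q`. -/
theorem norm_le_of_natCast_mul_eq_sum {c S : ℕ → ℂ} {t : ℕ} {B q : ℝ} (hq : 0 < q)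
    (hc0 : c 0 = 1) (hct : ∀ k, t ≤ k → c k = 0)
    (hcS : ∀ k : ℕ, k * c k = ∑ j ∈ Icc 1 k, S j * c (k - j))
    (hS : ∀ r : ℕ, r ≠ 0 → ‖S (2 * r)‖ ≤ B * q ^ r) :
    ‖c 1‖ ≤ (t - 1 : ℕ) * √q := by
  have hs : 0 < √q := Real.sqrt_pos.2 hq
  have ht : t ≠ 0 := by
    rintro rfl
    exact one_ne_zero (hc0.symm.trans (hct 0 le_rfl))
  let S₀ : ℕ → ℂ := fun j => if j = 0 then 0 else S j
  have hcS' : ∀ k : ℕ, k * c k = ∑ x ∈ antidiagonal k, c x.1 * S₀ x.2 := by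
    intro k
    rw [hcS, ← Nat.sum_antidiagonal_swap, Nat.sum_antidiagonal_eq_sum_range_succ_mk,
      range_eq_Ico, sum_eq_sum_Ico_succ_bot (Nat.succ_pos k)]
    simp only [S₀, Prod.swap, if_true, mul_zero, zero_add]
    refine sum_congr (by ext; simp) fun j hj => ?_
    rw [mem_Ico] at hj
    rw [if_neg (by omega), mul_comm]
  let L : ℂ[X] := ∑ k ∈ range t, Polynomial.monomial k (c k)
  have hL : ∀ k, L.coeff k = c k := by
    intro k
    simp only [L, finsetSum_coeff, Polynomial.coeff_monomial]
    rw [sum_ite_eq' (range t) k c]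
    split_ifs with h
    · rfl
    · rw [hct k (by simpa using h)]
  have hLdeg : L.natDegree ≤ t - 1 := by
    rw [natDegree_le_iff_coeff_eq_zero]
    intro k hk
    rw [hL, hct k (by omega)]
  let L' : ℂ[X] := L.comp (-Polynomial.X)
  have hL' : ∀ k, L'.coeff k = (-1) ^ k * c k := by
    intro k
    rw [show L' = L.comp (Polynomial.C (-1) * Polynomial.X) by simp [L'], comp_C_mul_X_coeff, hL,
      mul_comm]
  let G : ℕ → ℂ := fun k => S₀ k + (-1) ^ k * S₀ k
  let A : PowerSeries ℂ := PowerSeries.mk S₀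
  let A' : PowerSeries ℂ := PowerSeries.mk fun k => (-1) ^ k * S₀ k
  have hLA : ((Polynomial.X * derivative L : ℂ[X]) : PowerSeries ℂ) = L * A := by
    ext k
    rw [PowerSeries.coeff_mul, Polynomial.coeff_coe]
    simp only [Polynomial.coeff_coe, A, PowerSeries.coeff_mk, hL, ← hcS']
    cases k with
    | zero => simp
    | succ k => rw [Polynomial.coeff_X_mul, Polynomial.coeff_derivative, hL]; push_cast; ring
  have hLA' : ((Polynomial.X * derivative L' : ℂ[X]) : PowerSeries ℂ) = L' * A' := by
    ext k
    rw [PowerSeries.coeff_mul, Polynomial.coeff_coe]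
    simp only [Polynomial.coeff_coe, A', PowerSeries.coeff_mk, hL']
    have : ∑ x ∈ antidiagonal k, (-1) ^ x.1 * c x.1 * ((-1) ^ x.2 * S₀ x.2) =
        (-1) ^ k * (k * c k) := by
      rw [hcS', mul_sum]
      refine sum_congr rfl fun x hx => ?_
      rw [← mem_antidiagonal.1 hx, pow_add]
      ring
    rw [this]
    cases k with
    | zero => simp
    | succ k => rw [Polynomial.coeff_X_mul, Polynomial.coeff_derivative, hL']; push_cast; ring
  have hP : ((Polynomial.X * derivative (L * L') : ℂ[X]) : PowerSeries ℂ) =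
      (L * L' : ℂ[X]) * (A + A') := by
    have : (Polynomial.X * derivative (L * L') : ℂ[X]) =
        (Polynomial.X * derivative L) * L' + L * (Polynomial.X * derivative L') := by
      rw [derivative_mul]; ring
    rw [this, Polynomial.coe_add, Polynomial.coe_mul, Polynomial.coe_mul L, hLA, hLA',
      Polynomial.coe_mul]
    ring
  have hroot : ∀ u : ℂ, L.eval u = 0 → (√q)⁻¹ ≤ ‖u‖ := by
    intro u hu
    by_contra! hlt
    refine eval_ne_zero_of_natCast_mul_coeff (P := L * L') (G := G) (B := 2 * |B|) ?_ ?_ ?_ hs hlt ?_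
    · rw [← coeff_zero_eq_eval_zero, mul_coeff_zero, hL, hL', hc0]
      simp
    · intro k
      rcases Nat.even_or_odd' k with ⟨r, rfl | rfl⟩
      · by_cases hr : r = 0
        · simp [G, S₀, hr]
        · have : G (2 * r) = 2 * S (2 * r) := by
            simp [G, S₀, hr]; ring
          rw [this, norm_mul, pow_mul, Real.sq_sqrt hq.le, mul_assoc]
          have h2 : ‖(2 : ℂ)‖ = 2 := by simp
          rw [h2]
          have := (hS r hr).trans (mul_le_mul_of_nonneg_right (le_abs_self B) (by positivity))
          linarith
      · have : G (2 * r + 1) = 0 := by simp [G, pow_succ, pow_mul]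
        rw [this, norm_zero]
        positivity
    · intro k
      have := congrArg (PowerSeries.coeff k) hP
      rw [PowerSeries.coeff_mul, Polynomial.coeff_coe] at this
      simp only [Polynomial.coeff_coe, A, A', map_add, PowerSeries.coeff_mk] at this
      rw [← this]
      cases k with
      | zero => simp
      | succ k => rw [Polynomial.coeff_X_mul, Polynomial.coeff_derivative]; push_cast; ring
    · rw [eval_mul, hu, zero_mul]
  have h1 := norm_coeff_one_le (by rw [hL, hc0]) hs hroot
  rw [hL] at h1
  exact h1.trans (mul_le_mul_of_nonneg_right (by exact_mod_cast hLdeg) hs.le)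

end RootBound

section CharacterSums

variable {F : Type*} [Field F] [Fintype F]

/-- Weil's bound for sums of products of shifts of a multiplicative character of prime order. -/
theorem norm_sum_prod_mulChar_pow_le {χ : MulChar F ℂ} (hℓ : (orderOf χ).Prime)
    {T : Finset F} {e : F → ℕ} {a₀ : F} (ha₀ : a₀ ∈ T) (hcop : (orderOf χ).Coprime (e a₀)) :
    ‖∑ x : F, ∏ a ∈ T, χ (a - x) ^ e a‖ ≤ (#T - 1 : ℕ) * √(Fintype.card F) := by
  have he : e a₀ ≠ 0 := fun h => hℓ.one_lt.ne' (by simpa [h] using hcop)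
  have hχ : χ ^ e a₀ ≠ 1 := fun h =>
    hℓ.one_lt.ne' (hcop.eq_one_of_dvd (orderOf_dvd_iff_pow_eq_one.2 h))
  obtain ⟨B, hB⟩ := exists_norm_lPowerSum_evalMulChar_le hℓ ha₀ hcop
  have := norm_le_of_natCast_mul_eq_sum (c := lCoeff (evalMulChar χ T e))
    (S := lPowerSum (evalMulChar χ T e)) (t := #T) (q := Fintype.card F)
    (by exact_mod_cast Fintype.card_pos) (lCoeff_zero _)
    (fun k hk => lCoeff_evalMulChar_eq_zero ha₀ he hχ hk) (natCast_mul_lCoeff _) hB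
  rw [lCoeff_one] at this
  simpa [evalMulChar_apply] using this

theorem MulChar.norm_apply_le_one (χ : MulChar F ℂ) (y : F) : ‖χ y‖ ≤ 1 := by
  rcases eq_or_ne y 0 with rfl | hy
  · simp
  · refine (Complex.norm_eq_one_of_pow_eq_one (n := Fintype.card F - 1) ?_ ?_).le
    · rw [← map_pow, FiniteField.pow_card_sub_one_eq_one y hy, map_one]
    · have := Fintype.one_lt_card (α := F); omega

theorem exists_notMem_forall_mulChar_sub_ne_one {χ : MulChar F ℂ} (hℓ : (orderOf χ).Prime)
    {S : Finset F} (hS : (2 ^ #S * #S) ^ 2 < Fintype.card F) :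
    ∃ x ∉ S, ∀ a ∈ S, χ (a - x) ≠ 1 := by
  classical
  by_contra! hcontra
  set ℓ := orderOf χ with hℓdef
  set M := #S with hM
  set s := √(Fintype.card F : ℝ) with hs
  have hℓ1 : (0 : ℝ) < ℓ - 1 := by
    have : (1 : ℝ) < ℓ := by exact_mod_cast hℓ.one_lt
    linarith
  obtain ⟨d, hd⟩ : ∃ d, ℓ = d + 1 := ⟨ℓ - 1, by have := hℓ.one_lt; omega⟩
  have hd0 : (d : ℝ) ≠ 0 := by
    have := hℓ.one_lt
    exact_mod_cast (by omega : d ≠ 0)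
  let w : ℕ → ℂ := fun i => if i = 0 then 1 else -(d : ℂ)⁻¹
  have hw : ∑ i ∈ range ℓ, ‖w i‖ = 2 := by
    rw [hd, sum_range_succ']
    simp only [w, if_false, if_true, norm_neg, norm_inv, sum_const, card_range,
      RCLike.norm_natCast, nsmul_eq_mul, norm_one, add_eq_zero, one_ne_zero, and_false]
    rw [mul_inv_cancel₀ hd0]
    norm_num
  let φ : F → ℂ := fun y => ∑ i ∈ range ℓ, w i * χ y ^ i
  have hφ1 : ∀ y, χ y = 1 → φ y = 0 := by
    intro y hy
    simp only [φ, hy, one_pow, mul_one]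
    rw [hd, sum_range_succ']
    simp only [w, if_false, if_true, sum_const, card_range,
      nsmul_eq_mul, add_eq_zero, one_ne_zero, and_false]
    rw [mul_neg, mul_inv_cancel₀ (by exact_mod_cast hd0)]
    norm_num
  have hφ2 : ∀ y, ‖φ y‖ ≤ 2 := by
    intro y
    rw [← hw]
    refine norm_sum_le_of_le _ fun i _ => ?_
    rw [norm_mul, norm_pow]
    exact mul_le_of_le_one_right (norm_nonneg _)
      (pow_le_one₀ (norm_nonneg _) (χ.norm_apply_le_one y))
  have hupper : ‖∑ x : F, ∏ a ∈ S, φ (a - x)‖ ≤ M * 2 ^ M := by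
    rw [← sum_subset (subset_univ S)]
    · refine (norm_sum_le_of_le S (fun x _ => ?_)).trans_eq (by rw [sum_const, nsmul_eq_mul])
      rw [norm_prod]
      exact (prod_le_prod (fun _ _ => norm_nonneg _) fun a _ => hφ2 _).trans_eq (by simp [hM])
    · intro x _ hx
      obtain ⟨a, ha, hax⟩ := hcontra x hx
      exact prod_eq_zero ha (hφ1 _ hax)
  let E : Finset (S → ℕ) := Fintype.piFinset fun _ => range ℓ
  have hexp : ∑ x : F, ∏ a ∈ S, φ (a - x) =
      ∑ e ∈ E, (∏ a, w (e a)) * ∑ x : F, ∏ a : S, χ (a - x) ^ e a := by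
    simp_rw [mul_sum]
    rw [sum_comm]
    refine sum_congr rfl fun x _ => ?_
    rw [← prod_coe_sort]
    simp only [φ, E]
    rw [prod_univ_sum]
    exact sum_congr rfl fun e _ => prod_mul_distrib
  have hE0 : (0 : S → ℕ) ∈ E := by
    simp [E, hℓ.pos]
  have hterm : ∀ e ∈ E.erase 0, ‖(∏ a, w (e a)) * ∑ x : F, ∏ a : S, χ (a - x) ^ e a‖ ≤
      (∏ a, ‖w (e a)‖) * ((M - 1 : ℕ) * s) := by
    intro e he
    rw [mem_erase] at he
    obtain ⟨a₀, ha₀⟩ := Function.ne_iff.1 he.1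
    have hlt : e a₀ < ℓ := by simpa using Fintype.mem_piFinset.1 he.2 a₀
    rw [norm_mul, norm_prod]
    refine mul_le_mul_of_nonneg_left ?_ (prod_nonneg fun _ _ => norm_nonneg _)
    let e' : F → ℕ := fun a => if h : a ∈ S then e ⟨a, h⟩ else 0
    have he' : ∀ a : S, e' a = e a := fun a => by simp [e']
    have hcop : ℓ.Coprime (e' a₀) := by
      rw [he']
      exact (hℓ.coprime_iff_not_dvd).2 fun h =>
        (Nat.le_of_dvd (Nat.pos_of_ne_zero ha₀) h).not_gt hlt
    have := norm_sum_prod_mulChar_pow_le hℓ a₀.2 hcop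
    simp_rw [← prod_coe_sort S, he'] at this
    exact this
  have hmain : (Fintype.card F : ℝ) ≤ M * 2 ^ M + 2 ^ M * ((M - 1 : ℕ) * s) := by
    have h0 : (∏ a : S, w ((0 : S → ℕ) a)) * ∑ x : F, ∏ a : S, χ (a - x) ^ (0 : S → ℕ) a =
        Fintype.card F := by simp [w]
    have h1 : ∑ e ∈ E.erase 0, (∏ a, ‖w (e a)‖) * ((M - 1 : ℕ) * s) ≤
        2 ^ M * ((M - 1 : ℕ) * s) := by
      rw [← sum_mul]
      refine mul_le_mul_of_nonneg_right ?_ (by positivity)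
      refine (sum_le_sum_of_subset_of_nonneg (erase_subset _ _) fun _ _ _ =>
        prod_nonneg fun _ _ => norm_nonneg _).trans_eq ?_
      rw [← prod_univ_sum (fun _ : S => range ℓ) fun _ i => ‖w i‖, hw]
      simp [hM]
    have h2 : (Fintype.card F : ℂ) = ∑ x : F, ∏ a ∈ S, φ (a - x) -
        ∑ e ∈ E.erase 0, (∏ a, w (e a)) * ∑ x : F, ∏ a : S, χ (a - x) ^ e a := by
      rw [hexp, ← add_sum_erase E _ hE0, h0, add_sub_cancel_right]
    calc (Fintype.card F : ℝ) = ‖(Fintype.card F : ℂ)‖ := by simp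
      _ ≤ _ := by
        rw [h2]
        exact (norm_sub_le _ _).trans
          (add_le_add hupper ((norm_sum_le_of_le _ hterm).trans h1))
  have hsq : s ^ 2 = Fintype.card F := Real.sq_sqrt (by positivity)
  have hsM : (2 ^ M * M : ℝ) < s := Real.lt_sqrt_of_sq_lt (by exact_mod_cast hS)
  have hs0 : 0 < s := lt_of_le_of_lt (by positivity) hsM
  rw [← hsq] at hmain
  rcases Nat.eq_zero_or_pos M with h0 | hpos
  · rw [h0] at hmain
    norm_num at hmain
    nlinarith
  · rw [Nat.cast_sub hpos, Nat.cast_one] at hmain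
    have h2 : (1 : ℝ) ≤ 2 ^ M := one_le_pow₀ (by norm_num)
    have h3 := mul_lt_mul_of_pos_right hsM hs0
    have h4 := mul_le_mul_of_nonneg_right h2 hs0.le
    nlinarith

end CharacterSums

section Potents

variable {F : Type*} [Field F] [Fintype F]

open Classical in
theorem card_filter_neg_pow_eq_neg_le {m : ℕ} (hm : 1 < m) :
    #{a : F | (-a) ^ m = -a} ≤ m := by
  have hne := FiniteField.X_pow_card_sub_X_ne_zero F hm
  have hsub : ({a : F | (-a) ^ m = -a} : Finset F).image Neg.neg ⊆
      (X ^ m - X : F[X]).roots.toFinset := by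
    intro b hb
    obtain ⟨a, ha, rfl⟩ := mem_image.1 hb
    rw [Multiset.mem_toFinset, mem_roots hne]
    rw [IsRoot.def, eval_sub, eval_pow, eval_X, sub_eq_zero]
    simpa using ha
  rw [← card_image_of_injective _ neg_injective]
  refine (card_le_card hsub).trans ((Multiset.toFinset_card_le _).trans ?_)
  exact (card_roots' _).trans_eq (FiniteField.X_pow_card_sub_X_natDegree_eq F hm)

/-- If `(n - 1) ∣ (q - 1)` properly, some character of prime order is trivial on all nonzero
`n`-potents. -/
theorem exists_mulChar_prime_orderOf_eq_one {n : ℕ} (hn : 1 < n) (hnq : n < Fintype.card F)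
    (hdvd : (n - 1) ∣ (Fintype.card F - 1)) :
    ∃ χ : MulChar F ℂ, (orderOf χ).Prime ∧ ∀ b : F, b ≠ 0 → b ^ n = b → χ b = 1 := by
  obtain ⟨e, he⟩ := hdvd
  have he1 : e ≠ 1 := by rintro rfl; omega
  have hℓ := Nat.minFac_prime he1
  obtain ⟨d, hd⟩ := Nat.minFac_dvd e
  obtain ⟨χ, hχ⟩ := MulChar.exists_mulChar_orderOf F (n := e.minFac)
    (he ▸ (Nat.minFac_dvd e).mul_left _) (Complex.isPrimitiveRoot_exp _ hℓ.ne_zero)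
  have ht : orderOf χ * ((n - 1) * d) = Fintype.card F - 1 := by
    rw [hχ, he]
    conv_rhs => rw [hd]
    ring
  refine ⟨χ, hχ ▸ hℓ, fun b hb hbn => ?_⟩
  rw [mulChar_eq_one_iff_pow_eq_one ht hb, pow_mul]
  have : b ^ (n - 1) = 1 := by
    apply mul_right_cancel₀ hb
    rw [← pow_succ, Nat.sub_add_cancel hn.le, hbn, one_mul]
  rw [this, one_pow]

end Potents

end WeilBound

/-- For a fixed `m > 2` and a prime power `q` with `(m-1) ∣ (q-1)` and `q > (2^m · m)²`,
for every `n` with `1 < n < q` and `(n-1) ∣ (q-1)`, not every element of the finite field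
with `q` elements is the sum of an `m`-potent and an `n`-potent. -/
theorem not_sum_of_m_potent_and_n_potent_of_large
    (m q : ℕ) (hm : 2 < m) (hq : IsPrimePow q) (hmq : (m - 1) ∣ (q - 1))
    (hq' : (2 ^ m * m) ^ 2 < q)
    (F : Type*) [Field F] [Fintype F] (hF : Fintype.card F = q) :
    ∀ n : ℕ, 1 < n → n < q → (n - 1) ∣ (q - 1) →
      ¬ (∀ γ : F, ∃ a b : F, a ^ m = a ∧ b ^ n = b ∧ a + b = γ) := by
  classical
  intro n hn hnq hdvd h
  subst hF
  obtain ⟨χ, hℓ, hχ⟩ := exists_mulChar_prime_orderOf_eq_one hn hnq hdvd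
  have hcard := card_filter_neg_pow_eq_neg_le (F := F) (m := m) (by omega)
  obtain ⟨x, hxS, hx⟩ := exists_notMem_forall_mulChar_sub_ne_one hℓ
    (S := {a : F | (-a) ^ m = -a})
    (lt_of_le_of_lt (Nat.pow_le_pow_left (Nat.mul_le_mul
      (Nat.pow_le_pow_right two_pos (by convert hcard)) (by convert hcard)) 2) hq')
  obtain ⟨a, b, ha, hb, hab⟩ := h (-x)
  have ha' : -a ∈ ({a : F | (-a) ^ m = -a} : Finset F) := by simpa using ha
  have hbx : -a - x = b := by linear_combination -hab
  refine hx (-a) ha' (hbx ▸ hχ b ?_ hb)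
  rintro rfl
  exact hxS (sub_eq_zero.1 hbx ▸ ha')
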